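/- arXiv:1309.6693 — 2 statements merged into one kernel-verified Lean document; each statement's English description precedes it below -/
import Mathlib

section
/- (Theorem 5.1, convergence part) If σx is bounded on [0,∞), then e(t) → 0, e_L(t) → 0, and x̃(t) → 0 as t → ∞; consequently the plant state converges to the ideal reference state: x(t) − x_ri(t) = e(t) + x̃(t) → 0 as t → ∞. -/
open Matrix Filter

noncomputable section

/-- Euclidean norm ‖·‖₂ of a vector. -/
def norm2 {n : ℕ} (v : Fin n → ℝ) : ℝ := Real.sqrt (∑ i, v i ^ 2)

/-- Supremum (infinity) norm ‖·‖_∞ of a vector (the sup norm on `Fin n → ℝ`). -/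
def normInf {n : ℕ} (v : Fin n → ℝ) : ℝ := ‖v‖

/-- Frobenius norm ‖·‖_F of a matrix. -/
def normF {N m : ℕ} (W : Matrix (Fin N) (Fin m) ℝ) : ℝ := Real.sqrt (∑ i, ∑ j, W i j ^ 2)

/-- Smallest eigenvalue λ_min of a real symmetric (Hermitian) matrix. -/
def lamMin {n : ℕ} {A : Matrix (Fin n) (Fin n) ℝ} (hA : A.IsHermitian) : ℝ := ⨅ i, hA.eigenvalues i

/-- Largest eigenvalue λ_max of a real symmetric (Hermitian) matrix. -/
def lamMax {n : ℕ} {A : Matrix (Fin n) (Fin n) ℝ} (hA : A.IsHermitian) : ℝ := ⨆ i, hA.eigenvalues i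

/-- A real square matrix is Hurwitz if every (complex) eigenvalue has negative real part. -/
def Hurwitz {n : ℕ} (A : Matrix (Fin n) (Fin n) ℝ) : Prop :=
  ∀ μ : ℂ, (A.map Complex.ofReal).charpoly.IsRoot μ → μ.re < 0

/-- The Lyapunov function V(e, W̃) = eᵀ P e + γ⁻¹ tr((W̃ Λ^{1/2})ᵀ (W̃ Λ^{1/2})). -/
def Vlyap {n N m : ℕ} (γ : ℝ) (P : Matrix (Fin n) (Fin n) ℝ)
    (Lhalf : Matrix (Fin m) (Fin m) ℝ) (e : Fin n → ℝ) (W : Matrix (Fin N) (Fin m) ℝ) : ℝ :=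
  e ⬝ᵥ (P *ᵥ e) + γ⁻¹ * ((W * Lhalf)ᵀ * (W * Lhalf)).trace

/-- The augmented Lyapunov function V* of Theorem 5.1. -/
def Vstar {n N m : ℕ} (γ κ η ξ : ℝ) (P R : Matrix (Fin n) (Fin n) ℝ)
    (hP : P.IsHermitian) (hR : R.IsHermitian)
    (Lhalf : Matrix (Fin m) (Fin m) ℝ)
    (e : Fin n → ℝ) (W : Matrix (Fin N) (Fin m) ℝ) (eL xt : Fin n → ℝ) : ℝ :=
  Vlyap γ P Lhalf e W + η⁻¹ * κ * (eL ⬝ᵥ (P *ᵥ eL))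
    + 2 * ξ * κ⁻¹ * (lamMax hP)⁻¹ * lamMin hR * (xt ⬝ᵥ (P *ᵥ xt))

/-!
In the energy `eᵀPe + γ⁻¹ tr(W̃ΛW̃ᵀ) + (κ/η) e_LᵀPe_L` the weight update law cancels the indefinite
cross term, and the coefficient `κ/η` completes the filter terms to the square
`-2κ (e - e_L)ᵀP(e - e_L)`; the energy therefore decreases at rate at least `eᵀRe`. Hence `e`,
`κ e_L` and `ΛW̃ᵀ` are bounded, so `e'` is bounded because `σx` is, and Barbalat's lemma gives
`e → 0`. Then `e_L` and `x̃` are outputs of exponentially stable linear systems driven by the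
vanishing inputs `ηe` and `κ(e - e_L)`, so they vanish in turn.
-/

open scoped Topology
open Asymptotics Set

section MonotoneConvergence

lemma antitoneOn_Ici_of_hasDerivAt_nonpos {f f' : ℝ → ℝ} {a : ℝ}
    (hf : ∀ t ≥ a, HasDerivAt f (f' t) t) (hf' : ∀ t ≥ a, f' t ≤ 0) : AntitoneOn f (Ici a) :=
  antitoneOn_of_hasDerivWithinAt_nonpos (convex_Ici a)
    (fun t ht => (hf t ht).continuousAt.continuousWithinAt)
    (fun t ht => (hf t (interior_subset ht)).hasDerivWithinAt)
    fun t ht => hf' t (interior_subset ht)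

lemma exists_tendsto_atTop_of_antitoneOn_Ici {f : ℝ → ℝ} {a : ℝ} (hf : AntitoneOn f (Ici a))
    (hbdd : BddBelow (f '' Ici a)) : ∃ l, Tendsto f atTop (𝓝 l) := by
  have hanti : Antitone fun t => f (max t a) := fun s t hst =>
    hf (le_max_right s a) (le_max_right t a) (max_le_max_right a hst)
  have hrange : BddBelow (range fun t => f (max t a)) :=
    hbdd.mono (range_subset_iff.2 fun t => mem_image_of_mem f (le_max_right t a))
  refine ⟨_, (tendsto_atTop_ciInf hanti hrange).congr' ?_⟩
  filter_upwards [eventually_ge_atTop a] with t ht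
  rw [max_eq_left ht]

end MonotoneConvergence

section Barbalat

variable {E : Type*} [SeminormedAddCommGroup E]

/- Barbalat's lemma: if `‖x t‖ ≥ ε` then uniform continuity keeps `‖x‖ ≥ ε / 2` for a fixed time
after `t`, so `V` drops by a fixed amount; a convergent `V` can do so only finitely often. -/
lemma tendsto_zero_of_deriv_le_neg_mul_norm_pow {x : ℝ → E} {V V' : ℝ → ℝ} {a c : ℝ} {p : ℕ}
    (hc : 0 < c) (hx : UniformContinuousOn x (Ici a))
    (hV : ∀ t ≥ a, HasDerivAt V (V' t) t) (hV' : ∀ t ≥ a, V' t ≤ -(c * ‖x t‖ ^ p))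
    (hbdd : BddBelow (V '' Ici a)) : Tendsto x atTop (𝓝 0) := by
  have hanti : AntitoneOn V (Ici a) := antitoneOn_Ici_of_hasDerivAt_nonpos hV fun t ht =>
    (hV' t ht).trans (neg_nonpos.2 (by positivity))
  obtain ⟨l, hl⟩ := exists_tendsto_atTop_of_antitoneOn_Ici hanti hbdd
  rw [tendsto_zero_iff_norm_tendsto_zero, Metric.tendsto_nhds]
  intro ε hε
  obtain ⟨δ, hδ, hxδ⟩ := Metric.uniformContinuousOn_iff.1 hx (ε / 2) (half_pos hε)
  have hdiff : Tendsto (fun t => V t - V (t + δ / 2)) atTop (𝓝 0) := by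
    simpa using hl.sub (hl.comp (tendsto_atTop_add_const_right atTop (δ / 2) tendsto_id))
  have hdrop : 0 < c * (ε / 2) ^ p * (δ / 2) := by positivity
  filter_upwards [hdiff.eventually (gt_mem_nhds hdrop), eventually_ge_atTop a] with t hVt hat
  rw [Real.dist_0_eq_abs, abs_norm]
  by_contra! hεt
  have hlarge : ∀ s ∈ Icc t (t + δ / 2), ε / 2 ≤ ‖x s‖ := fun s hs => by
    have hst : dist s t < δ := by
      rw [Real.dist_eq, abs_of_nonneg (sub_nonneg.2 hs.1)]
      linarith [hs.2]
    have hclose : ‖x t‖ - ‖x s‖ ≤ dist (x s) (x t) := by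
      rw [dist_comm, dist_eq_norm]
      exact norm_sub_norm_le _ _
    linarith [hxδ s (hat.trans hs.1) t hat hst]
  have hdecay : V (t + δ / 2) - V t ≤ -(c * (ε / 2) ^ p) * (t + δ / 2 - t) := by
    refine (convex_Icc t (t + δ / 2)).image_sub_le_mul_sub_of_deriv_le
      (fun s hs => (hV s (hat.trans hs.1)).continuousAt.continuousWithinAt)
      (fun s hs => (hV s (hat.trans (interior_subset hs).1)).differentiableAt
        |>.differentiableWithinAt) (fun s hs => ?_)
      t (left_mem_Icc.2 (by linarith)) _ (right_mem_Icc.2 (by linarith)) (by linarith)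
    have hs := interior_subset hs
    rw [(hV s (hat.trans hs.1)).deriv]
    refine (hV' s (hat.trans hs.1)).trans (neg_le_neg ?_)
    gcongr
    exact hlarge s hs
  linarith

lemma uniformContinuousOn_of_hasDerivAt_isBigO_one {F : Type*} [NormedAddCommGroup F]
    [NormedSpace ℝ F] {x x' : ℝ → F} {s : Set ℝ} (hs : Convex ℝ s)
    (hx : ∀ t ∈ s, HasDerivAt x (x' t) t) (hx' : x' =O[𝓟 s] (1 : ℝ → ℝ)) :
    UniformContinuousOn x s := by
  obtain ⟨C, hC⟩ := isBigO_principal.1 hx'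
  refine (hs.lipschitzOnWith_of_nnnorm_hasDerivWithin_le (C := C.toNNReal)
    (fun t ht => (hx t ht).hasDerivWithinAt) fun t ht => ?_).uniformContinuousOn
  exact NNReal.le_toNNReal_of_coe_le (by simpa using hC t ht)

lemma isBigO_one_of_mul_norm_sq_le {α : Type*} {x : α → E} {s : Set α} {c C : ℝ} (hc : 0 < c)
    (h : ∀ t ∈ s, c * ‖x t‖ ^ 2 ≤ C) : x =O[𝓟 s] (1 : α → ℝ) := by
  refine isBigO_principal.2 ⟨√(C / c), fun t ht => ?_⟩
  simpa using Real.le_sqrt_of_sq_le ((le_div_iff₀' hc).2 (h t ht))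

end Barbalat

section ScalarComparison

lemma le_add_mul_exp_of_deriv_le {v v' : ℝ → ℝ} {a b T : ℝ}
    (hv : ∀ t ≥ T, HasDerivAt v (v' t) t) (hv' : ∀ t ≥ T, v' t ≤ -a * (v t - b))
    {t : ℝ} (ht : T ≤ t) : v t ≤ b + (v T - b) * Real.exp (-a * (t - T)) := by
  have hexp (s : ℝ) : HasDerivAt (fun s => Real.exp (a * (s - T)))
      (Real.exp (a * (s - T)) * a) s := by
    simpa using (((hasDerivAt_id s).sub_const T).const_mul a).exp
  have hanti : AntitoneOn (fun s => (v s - b) * Real.exp (a * (s - T))) (Ici T) := by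
    refine antitoneOn_Ici_of_hasDerivAt_nonpos
      (fun s hs => ((hv s hs).sub_const b).mul (hexp s)) fun s hs => ?_
    calc v' s * Real.exp (a * (s - T)) + (v s - b) * (Real.exp (a * (s - T)) * a)
        = (v' s + a * (v s - b)) * Real.exp (a * (s - T)) := by ring
      _ ≤ 0 := mul_nonpos_of_nonpos_of_nonneg (by linarith [hv' s hs]) (Real.exp_nonneg _)
  have hle : (v t - b) * Real.exp (a * (t - T)) ≤ v T - b := by
    simpa using hanti self_mem_Ici ht ht
  rw [← sub_le_iff_le_add', neg_mul, Real.exp_neg, ← div_eq_mul_inv]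
  exact (le_div_iff₀ (Real.exp_pos _)).2 hle

lemma tendsto_zero_of_deriv_le_neg_mul_add {v v' w : ℝ → ℝ} {a : ℝ} (ha : 0 < a)
    (hv : ∀ᶠ t in atTop, HasDerivAt v (v' t) t) (hv' : ∀ᶠ t in atTop, v' t ≤ -a * v t + w t)
    (hv0 : ∀ᶠ t in atTop, 0 ≤ v t) (hw : Tendsto w atTop (𝓝 0)) : Tendsto v atTop (𝓝 0) := by
  rw [Metric.tendsto_nhds]
  intro ε hε
  have hwε : ∀ᶠ t in atTop, w t < a * (ε / 2) := hw.eventually (gt_mem_nhds (by positivity))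
  obtain ⟨T, hT⟩ := eventually_atTop.1 (hv.and (hv'.and hwε))
  have hbound : ∀ t ≥ T, v t ≤ ε / 2 + (v T - ε / 2) * Real.exp (-a * (t - T)) := fun t ht =>
    le_add_mul_exp_of_deriv_le (fun s hs => (hT s hs).1)
      (fun s hs => by linarith [(hT s hs).2.1, (hT s hs).2.2]) ht
  have hlim : Tendsto (fun t => ε / 2 + (v T - ε / 2) * Real.exp (-a * (t - T))) atTop
      (𝓝 (ε / 2)) := by
    have hexp : Tendsto (fun t => Real.exp (-a * (t - T))) atTop (𝓝 0) :=
      Real.tendsto_exp_atBot.comp <|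
        (tendsto_atTop_add_const_right atTop (-T) tendsto_id).const_mul_atTop_of_neg
          (neg_neg_of_pos ha)
    simpa using (hexp.const_mul (v T - ε / 2)).const_add (ε / 2)
  filter_upwards [hv0, eventually_ge_atTop T, hlim.eventually (gt_mem_nhds (half_lt_self hε))]
    with t h0 ht hlt
  rw [Real.dist_0_eq_abs, abs_of_nonneg h0]
  exact (hbound t ht).trans_lt hlt

end ScalarComparison

section QuadraticForms

variable {n : Type*} [Fintype n] {M P : Matrix n n ℝ}

lemma dotProduct_mulVec_comm_of_isSymm (hM : M.IsSymm) (x y : n → ℝ) :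
    x ⬝ᵥ M *ᵥ y = y ⬝ᵥ M *ᵥ x := by
  rw [← dotProduct_transpose_mulVec, hM.eq]

lemma dotProduct_mulVec_self_nonneg (hM : M.PosSemidef) (x : n → ℝ) : 0 ≤ x ⬝ᵥ M *ᵥ x := by
  simpa using hM.dotProduct_mulVec_nonneg x

lemma two_mul_dotProduct_mulVec_le (hM : M.PosSemidef) {a : ℝ} (ha : 0 < a) (x y : n → ℝ) :
    2 * (x ⬝ᵥ M *ᵥ y) ≤ a * (x ⬝ᵥ M *ᵥ x) + a⁻¹ * (y ⬝ᵥ M *ᵥ y) := by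
  have hsq := mul_nonneg (inv_nonneg.2 ha.le) (dotProduct_mulVec_self_nonneg hM (a • x - y))
  have hcomm := dotProduct_mulVec_comm_of_isSymm (isHermitian_iff_isSymm.1 hM.isHermitian) y x
  simp only [mulVec_sub, mulVec_smul, sub_dotProduct, dotProduct_sub, smul_dotProduct,
    dotProduct_smul, smul_eq_mul, hcomm] at hsq
  field_simp at hsq ⊢
  linarith

lemma norm_sq_le_dotProduct_self (x : n → ℝ) : ‖x‖ ^ 2 ≤ x ⬝ᵥ x := by
  have hnonneg : 0 ≤ x ⬝ᵥ x := Finset.sum_nonneg fun i _ => mul_self_nonneg (x i)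
  rw [← Real.le_sqrt (norm_nonneg x) hnonneg, pi_norm_le_iff_of_nonneg (Real.sqrt_nonneg _)]
  refine fun i => Real.abs_le_sqrt ?_
  rw [sq]
  exact Finset.single_le_sum (fun j _ => mul_self_nonneg (x j)) (Finset.mem_univ i)

lemma dotProduct_self_le_card_mul_norm_sq (x : n → ℝ) :
    x ⬝ᵥ x ≤ Fintype.card n * ‖x‖ ^ 2 := by
  rw [← nsmul_eq_mul]
  refine Finset.sum_le_card_nsmul _ _ _ fun i _ => ?_
  rw [← sq, ← sq_abs]
  gcongr
  exact norm_le_pi_norm x i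

open scoped Matrix.Norms.Operator in
lemma exists_norm_mulVec_le {m : Type*} [Fintype m] (A : Matrix m n ℝ) :
    ∃ C > 0, ∀ x, ‖A *ᵥ x‖ ≤ C * ‖x‖ :=
  ⟨‖A‖ + 1, by positivity, fun x => (linfty_opNorm_mulVec A x).trans (by gcongr; linarith)⟩

lemma isBigO_mulVec {m α : Type*} [Fintype m] (A : Matrix m n ℝ) (x : α → n → ℝ) (l : Filter α) :
    (fun t => A *ᵥ x t) =O[l] x := by
  obtain ⟨C, -, hC⟩ := exists_norm_mulVec_le A
  exact .of_bound C (.of_forall fun t => hC (x t))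

open scoped MatrixOrder Matrix.Norms.L2Operator in
lemma exists_eq_transpose_mul_self (hM : M.PosSemidef) : ∃ S : Matrix n n ℝ, M = Sᵀ * S := by
  classical
  exact CStarAlgebra.nonneg_iff_eq_star_mul_self.1 hM.nonneg

lemma exists_norm_sq_mulVec_le_quadForm (hM : M.PosSemidef) :
    ∃ C > 0, ∀ x, ‖M *ᵥ x‖ ^ 2 ≤ C * (x ⬝ᵥ M *ᵥ x) := by
  obtain ⟨S, rfl⟩ := exists_eq_transpose_mul_self hM
  obtain ⟨C, hC, hSC⟩ := exists_norm_mulVec_le Sᵀ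
  refine ⟨C ^ 2, by positivity, fun x => ?_⟩
  calc ‖(Sᵀ * S) *ᵥ x‖ ^ 2 = ‖Sᵀ *ᵥ (S *ᵥ x)‖ ^ 2 := by rw [mulVec_mulVec]
    _ ≤ (C * ‖S *ᵥ x‖) ^ 2 := by gcongr; exact hSC _
    _ = C ^ 2 * ‖S *ᵥ x‖ ^ 2 := mul_pow _ _ _
    _ ≤ C ^ 2 * (S *ᵥ x ⬝ᵥ S *ᵥ x) := by gcongr; exact norm_sq_le_dotProduct_self _
    _ = C ^ 2 * (x ⬝ᵥ (Sᵀ * S) *ᵥ x) := by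
      rw [← mulVec_mulVec, dotProduct_transpose_mulVec]

lemma exists_mul_norm_sq_le_quadForm (hM : M.PosDef) :
    ∃ c > 0, ∀ x, c * ‖x‖ ^ 2 ≤ x ⬝ᵥ M *ᵥ x := by
  classical
  obtain ⟨C, hC, hMC⟩ := exists_norm_sq_mulVec_le_quadForm hM.posSemidef
  obtain ⟨D, hD, hinv⟩ := exists_norm_mulVec_le M⁻¹
  refine ⟨(D ^ 2 * C)⁻¹, by positivity, fun x => (inv_mul_le_iff₀ (by positivity)).2 ?_⟩
  have hcancel : M⁻¹ *ᵥ (M *ᵥ x) = x := by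
    rw [mulVec_mulVec, nonsing_inv_mul M ((isUnit_iff_isUnit_det M).1 hM.isUnit), one_mulVec]
  calc ‖x‖ ^ 2 = ‖M⁻¹ *ᵥ (M *ᵥ x)‖ ^ 2 := by rw [hcancel]
    _ ≤ (D * ‖M *ᵥ x‖) ^ 2 := by gcongr; exact hinv _
    _ = D ^ 2 * ‖M *ᵥ x‖ ^ 2 := mul_pow _ _ _
    _ ≤ D ^ 2 * (C * (x ⬝ᵥ M *ᵥ x)) := by gcongr; exact hMC x
    _ = D ^ 2 * C * (x ⬝ᵥ M *ᵥ x) := (mul_assoc _ _ _).symm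

lemma exists_quadForm_le_mul_norm_sq (hM : M.PosSemidef) :
    ∃ C > 0, ∀ x, x ⬝ᵥ M *ᵥ x ≤ C * ‖x‖ ^ 2 := by
  obtain ⟨S, rfl⟩ := exists_eq_transpose_mul_self hM
  obtain ⟨C, hC, hSC⟩ := exists_norm_mulVec_le S
  refine ⟨(Fintype.card n + 1) * C ^ 2, by positivity, fun x => ?_⟩
  calc x ⬝ᵥ (Sᵀ * S) *ᵥ x = S *ᵥ x ⬝ᵥ S *ᵥ x := by
        rw [← mulVec_mulVec, dotProduct_transpose_mulVec]
    _ ≤ Fintype.card n * ‖S *ᵥ x‖ ^ 2 := dotProduct_self_le_card_mul_norm_sq _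
    _ ≤ (Fintype.card n + 1) * (C * ‖x‖) ^ 2 := by gcongr; exacts [by linarith, hSC x]
    _ = (Fintype.card n + 1) * C ^ 2 * ‖x‖ ^ 2 := by ring

lemma exists_mul_quadForm_le_quadForm (hP : P.PosSemidef) (hM : M.PosDef) :
    ∃ a > 0, ∀ x, a * (x ⬝ᵥ P *ᵥ x) ≤ x ⬝ᵥ M *ᵥ x := by
  obtain ⟨c, hc, hcM⟩ := exists_mul_norm_sq_le_quadForm hM
  obtain ⟨C, hC, hPC⟩ := exists_quadForm_le_mul_norm_sq hP
  refine ⟨c / C, by positivity, fun x => ?_⟩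
  calc c / C * (x ⬝ᵥ P *ᵥ x) ≤ c / C * (C * ‖x‖ ^ 2) := by gcongr; exact hPC x
    _ = c * ‖x‖ ^ 2 := by field_simp
    _ ≤ x ⬝ᵥ M *ᵥ x := hcM x

lemma hasDerivAt_quadForm (hM : M.IsSymm) {x : ℝ → n → ℝ} {x' : n → ℝ} {t : ℝ}
    (hx : HasDerivAt x x' t) :
    HasDerivAt (fun s => x s ⬝ᵥ M *ᵥ x s) (2 * (x t ⬝ᵥ M *ᵥ x')) t := by
  have hxi := hasDerivAt_pi.1 hx
  have hprod : HasDerivAt (fun s => x s ⬝ᵥ M *ᵥ x s) (x' ⬝ᵥ M *ᵥ x t + x t ⬝ᵥ M *ᵥ x') t := by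
    simp only [dotProduct, mulVec, ← Finset.sum_add_distrib]
    exact HasDerivAt.fun_sum fun i _ =>
      (hxi i).mul (HasDerivAt.fun_sum fun j _ => (hxi j).const_mul (M i j))
  rwa [dotProduct_mulVec_comm_of_isSymm hM x', ← two_mul] at hprod

lemma tendsto_zero_of_quadForm_tendsto_zero (hM : M.PosDef) {α : Type*} {l : Filter α}
    {x : α → n → ℝ} (h : Tendsto (fun t => x t ⬝ᵥ M *ᵥ x t) l (𝓝 0)) : Tendsto x l (𝓝 0) := by
  obtain ⟨c, hc, hcM⟩ := exists_mul_norm_sq_le_quadForm hM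
  have hsq : Tendsto (fun t => ‖x t‖ ^ 2) l (𝓝 0) :=
    squeeze_zero (fun t => by positivity) (fun t => (le_inv_mul_iff₀ hc).2 (hcM (x t)))
      (by simpa using h.const_mul c⁻¹)
  exact tendsto_zero_iff_norm_tendsto_zero.2 (by simpa using hsq.sqrt)

end QuadraticForms

section Lyapunov

variable {n : Type*} [Fintype n] {A P R : Matrix n n ℝ}

lemma two_mul_dotProduct_mulVec_of_lyapunov (hP : P.IsSymm) (hLyap : Aᵀ * P + P * A + R = 0)
    (x : n → ℝ) : 2 * (x ⬝ᵥ P *ᵥ (A *ᵥ x)) = -(x ⬝ᵥ R *ᵥ x) := by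
  have hform := congrArg (fun M => x ⬝ᵥ M *ᵥ x) hLyap
  have htranspose : x ⬝ᵥ Aᵀ *ᵥ (P *ᵥ x) = x ⬝ᵥ P *ᵥ (A *ᵥ x) := by
    rw [dotProduct_transpose_mulVec, dotProduct_comm, ← dotProduct_transpose_mulVec, hP.eq]
  simp only [add_mulVec, dotProduct_add, zero_mulVec, dotProduct_zero, ← mulVec_mulVec] at hform
  linarith

/- With `v = xᵀPx` and `R ≥ aP`, Young's inequality gives `v' ≤ -(a/2) v + (2/a) uᵀPu`. -/
lemma tendsto_zero_of_lyapunov_of_input_tendsto_zero (hP : P.PosDef) (hR : R.PosDef)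
    (hLyap : Aᵀ * P + P * A + R = 0) {x u : ℝ → n → ℝ}
    (hx : ∀ᶠ t in atTop, HasDerivAt x (A *ᵥ x t + u t) t) (hu : Tendsto u atTop (𝓝 0)) :
    Tendsto x atTop (𝓝 0) := by
  have hPsymm : P.IsSymm := isHermitian_iff_isSymm.1 hP.isHermitian
  obtain ⟨a, ha, haR⟩ := exists_mul_quadForm_le_quadForm hP.posSemidef hR
  have hinput : Tendsto (fun t => (a / 2)⁻¹ * (u t ⬝ᵥ P *ᵥ u t)) atTop (𝓝 0) := by
    have hcont : Continuous fun y : n → ℝ => (a / 2)⁻¹ * (y ⬝ᵥ P *ᵥ y) := by fun_prop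
    simpa [Function.comp_def] using (hcont.tendsto 0).comp hu
  refine tendsto_zero_of_quadForm_tendsto_zero hP <|
    tendsto_zero_of_deriv_le_neg_mul_add (half_pos ha)
      (hx.mono fun t ht => hasDerivAt_quadForm hPsymm ht) (.of_forall fun t => ?_)
      (.of_forall fun t => dotProduct_mulVec_self_nonneg hP.posSemidef (x t)) hinput
  have hyoung := two_mul_dotProduct_mulVec_le hP.posSemidef (half_pos ha) (x t) (u t)
  have hdrift := two_mul_dotProduct_mulVec_of_lyapunov hPsymm hLyap (x t)
  rw [mulVec_add, dotProduct_add, mul_add]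
  linarith [haR (x t)]

end Lyapunov

section AdaptiveLoop

variable {n k m : Type*} [Fintype n] [Fintype k] [Fintype m]
  {A P R : Matrix n n ℝ} {B : Matrix n m ℝ} {Λ : Matrix m m ℝ} {γ κ η : ℝ}
  {σ : ℝ → k → ℝ} {e eL : ℝ → n → ℝ} {W : ℝ → Matrix k m ℝ}

/-- The closed-loop error equations of the adaptive controller with filtered error feedback: the
system error `e`, its low-pass filtered version `eL` and the weight estimation error `W`. The
weight update law is stated entrywise because matrices carry no global norm. -/
structure IsFilteredAdaptiveLoop (A P : Matrix n n ℝ) (B : Matrix n m ℝ) (Λ : Matrix m m ℝ)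
    (γ κ η : ℝ) (σ : ℝ → k → ℝ) (e eL : ℝ → n → ℝ) (W : ℝ → Matrix k m ℝ) : Prop where
  hasDerivAt_error : ∀ t ≥ 0, HasDerivAt e
    (A *ᵥ e t - (B * Λ * (W t)ᵀ) *ᵥ σ t - κ • (e t - eL t)) t
  hasDerivAt_weight : ∀ t ≥ 0, ∀ i j, HasDerivAt (fun s => W s i j)
    (γ * (σ t i * (e t ᵥ* (P * B)) j)) t
  hasDerivAt_filter : ∀ t ≥ 0, HasDerivAt eL (A *ᵥ eL t + η • (e t - eL t)) t

/-- The Lyapunov function `eᵀPe + γ⁻¹ tr(WΛWᵀ) + (κ/η) e_LᵀPe_L` of the filtered adaptive loop,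
with the trace written as the sum of the values of the quadratic form `Λ` on the rows of `W`. -/
def adaptiveEnergy (P : Matrix n n ℝ) (Λ : Matrix m m ℝ) (γ κ η : ℝ) (e eL : n → ℝ)
    (W : Matrix k m ℝ) : ℝ :=
  e ⬝ᵥ P *ᵥ e + γ⁻¹ * ∑ i, W i ⬝ᵥ Λ *ᵥ W i + κ / η * (eL ⬝ᵥ P *ᵥ eL)

lemma mul_transpose_mulVec_eq_sum {l : Type*} (B : Matrix l m ℝ) (Λ : Matrix m m ℝ)
    (W : Matrix k m ℝ) (s : k → ℝ) : (B * Λ * Wᵀ) *ᵥ s = B *ᵥ ∑ i, s i • (Λ *ᵥ W i) := by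
  rw [← mulVec_mulVec, ← mulVec_mulVec, mulVec_eq_sum s]
  simp [mulVec_sum, mulVec_smul]

/- The cross term in the derivative of `eᵀPe` equals the one produced by the update law, which is
chosen to make the two cancel. -/
lemma dotProduct_mulVec_mul_transpose_eq_sum (hΛ : Λ.IsSymm) (W : Matrix k m ℝ) (x : n → ℝ)
    (s : k → ℝ) : x ⬝ᵥ P *ᵥ ((B * Λ * Wᵀ) *ᵥ s) =
      ∑ i, W i ⬝ᵥ Λ *ᵥ (s i • (x ᵥ* (P * B))) := by
  rw [mul_transpose_mulVec_eq_sum, mulVec_mulVec, dotProduct_mulVec, dotProduct_sum]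
  refine Finset.sum_congr rfl fun i _ => ?_
  rw [dotProduct_smul, mulVec_smul, dotProduct_smul, dotProduct_mulVec_comm_of_isSymm hΛ]

lemma adaptiveEnergy_nonneg (hP : P.PosSemidef) (hΛ : Λ.PosSemidef) (hγ : 0 ≤ γ) (hκ : 0 ≤ κ)
    (hη : 0 ≤ η) (e eL : n → ℝ) (W : Matrix k m ℝ) : 0 ≤ adaptiveEnergy P Λ γ κ η e eL W :=
  add_nonneg (add_nonneg (dotProduct_mulVec_self_nonneg hP e)
    (mul_nonneg (inv_nonneg.2 hγ)
      (Finset.sum_nonneg fun i _ => dotProduct_mulVec_self_nonneg hΛ (W i))))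
    (mul_nonneg (div_nonneg hκ hη) (dotProduct_mulVec_self_nonneg hP eL))

lemma isBigO_one_of_adaptiveEnergy_le_error (hP : P.PosDef) (hΛ : Λ.PosSemidef) (hγ : 0 ≤ γ)
    (hκ : 0 ≤ κ) (hη : 0 ≤ η) {s : Set ℝ} {C : ℝ}
    (hC : ∀ t ∈ s, adaptiveEnergy P Λ γ κ η (e t) (eL t) (W t) ≤ C) :
    e =O[𝓟 s] (1 : ℝ → ℝ) := by
  obtain ⟨c, hc, hcP⟩ := exists_mul_norm_sq_le_quadForm hP
  refine isBigO_one_of_mul_norm_sq_le hc fun t ht => (hcP (e t)).trans (le_trans ?_ (hC t ht))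
  have hrest := adaptiveEnergy_nonneg hP.posSemidef hΛ hγ hκ hη 0 (eL t) (W t)
  simp only [adaptiveEnergy, zero_dotProduct] at hrest ⊢
  linarith

lemma isBigO_one_of_adaptiveEnergy_le_filter (hP : P.PosDef) (hΛ : Λ.PosSemidef) (hγ : 0 ≤ γ)
    (hκ : 0 ≤ κ) (hη : 0 < η) {s : Set ℝ} {C : ℝ}
    (hC : ∀ t ∈ s, adaptiveEnergy P Λ γ κ η (e t) (eL t) (W t) ≤ C) :
    (fun t => κ • eL t) =O[𝓟 s] (1 : ℝ → ℝ) := by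
  obtain ⟨c, hc, hcP⟩ := exists_mul_norm_sq_le_quadForm hP
  refine isBigO_one_of_mul_norm_sq_le (div_pos hc hη) (C := κ * C) fun t ht => ?_
  have hrest := adaptiveEnergy_nonneg hP.posSemidef hΛ hγ hκ hη.le (e t) 0 (W t)
  have hfilter : κ / η * (eL t ⬝ᵥ P *ᵥ eL t) ≤ C := by
    refine le_trans ?_ (hC t ht)
    simp only [adaptiveEnergy, zero_dotProduct, mul_zero] at hrest ⊢
    linarith
  calc c / η * ‖κ • eL t‖ ^ 2 = κ * (κ / η * (c * ‖eL t‖ ^ 2)) := by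
        rw [norm_smul, mul_pow, Real.norm_eq_abs, sq_abs]
        ring
    _ ≤ κ * (κ / η * (eL t ⬝ᵥ P *ᵥ eL t)) := by gcongr; exact hcP _
    _ ≤ κ * C := by gcongr

lemma isBigO_one_of_adaptiveEnergy_le_weight (hP : P.PosSemidef) (hΛ : Λ.PosSemidef) (hγ : 0 < γ)
    (hκ : 0 ≤ κ) (hη : 0 ≤ η) {s : Set ℝ} {C : ℝ}
    (hC : ∀ t ∈ s, adaptiveEnergy P Λ γ κ η (e t) (eL t) (W t) ≤ C) (i : k) :
    (fun t => Λ *ᵥ W t i) =O[𝓟 s] (1 : ℝ → ℝ) := by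
  obtain ⟨D, hD, hΛD⟩ := exists_norm_sq_mulVec_le_quadForm hΛ
  refine isBigO_one_of_mul_norm_sq_le (inv_pos.2 (mul_pos hγ hD)) fun t ht =>
    le_trans ?_ (hC t ht)
  have hrow : W t i ⬝ᵥ Λ *ᵥ W t i ≤ ∑ j, W t j ⬝ᵥ Λ *ᵥ W t j :=
    Finset.single_le_sum (fun j _ => dotProduct_mulVec_self_nonneg hΛ (W t j)) (Finset.mem_univ i)
  calc (γ * D)⁻¹ * ‖Λ *ᵥ W t i‖ ^ 2 = γ⁻¹ * (D⁻¹ * ‖Λ *ᵥ W t i‖ ^ 2) := by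
        rw [mul_inv, mul_assoc]
    _ ≤ γ⁻¹ * ∑ j, W t j ⬝ᵥ Λ *ᵥ W t j := by
        gcongr
        exact ((inv_mul_le_iff₀ hD).2 (hΛD _)).trans hrow
    _ ≤ adaptiveEnergy P Λ γ κ η (e t) (eL t) (W t) := by
        have herror := dotProduct_mulVec_self_nonneg hP (e t)
        have hfilter := mul_nonneg (div_nonneg hκ hη) (dotProduct_mulVec_self_nonneg hP (eL t))
        rw [adaptiveEnergy]
        linarith

namespace IsFilteredAdaptiveLoop

lemma hasDerivAt_adaptiveEnergy (h : IsFilteredAdaptiveLoop A P B Λ γ κ η σ e eL W)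
    (hP : P.IsSymm) (hΛ : Λ.IsSymm) (hLyap : Aᵀ * P + P * A + R = 0) (hγ : γ ≠ 0) (hη : η ≠ 0)
    {t : ℝ} (ht : 0 ≤ t) :
    HasDerivAt (fun s => adaptiveEnergy P Λ γ κ η (e s) (eL s) (W s))
      (-(e t ⬝ᵥ R *ᵥ e t) - κ / η * (eL t ⬝ᵥ R *ᵥ eL t)
        - 2 * κ * ((e t - eL t) ⬝ᵥ P *ᵥ (e t - eL t))) t := by
  have hrow (i : k) : HasDerivAt (fun s => W s i) (γ • σ t i • (e t ᵥ* (P * B))) t :=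
    hasDerivAt_pi.2 (h.hasDerivAt_weight t ht i)
  have hderiv := ((hasDerivAt_quadForm hP (h.hasDerivAt_error t ht)).add
    ((HasDerivAt.fun_sum (u := Finset.univ) fun i _ =>
      hasDerivAt_quadForm hΛ (hrow i)).const_mul γ⁻¹)).add
    ((hasDerivAt_quadForm hP (h.hasDerivAt_filter t ht)).const_mul (κ / η))
  have hweight : γ⁻¹ * ∑ i, 2 * (W t i ⬝ᵥ Λ *ᵥ (γ • σ t i • (e t ᵥ* (P * B)))) =
      2 * (e t ⬝ᵥ P *ᵥ ((B * Λ * (W t)ᵀ) *ᵥ σ t)) := by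
    rw [dotProduct_mulVec_mul_transpose_eq_sum hΛ, Finset.mul_sum, Finset.mul_sum]
    refine Finset.sum_congr rfl fun i _ => ?_
    rw [mulVec_smul Λ γ, dotProduct_smul, smul_eq_mul]
    field_simp
  have herror := two_mul_dotProduct_mulVec_of_lyapunov hP hLyap (e t)
  have hfilter := two_mul_dotProduct_mulVec_of_lyapunov hP hLyap (eL t)
  refine hderiv.congr_deriv ?_
  rw [hweight, mulVec_sub P (_ - _), mulVec_sub P (_ *ᵥ _), mulVec_add, mulVec_smul, mulVec_smul,
    dotProduct_sub, dotProduct_sub, dotProduct_add, dotProduct_smul, dotProduct_smul,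
    sub_dotProduct, smul_eq_mul, smul_eq_mul]
  linear_combination herror + κ / η * hfilter +
    2 * (eL t ⬝ᵥ P *ᵥ (e t - eL t)) * div_mul_cancel₀ κ hη

lemma exists_hasDerivAt_adaptiveEnergy_le (h : IsFilteredAdaptiveLoop A P B Λ γ κ η σ e eL W)
    (hP : P.PosSemidef) (hΛ : Λ.IsSymm) (hR : R.PosSemidef) (hLyap : Aᵀ * P + P * A + R = 0)
    (hγ : γ ≠ 0) (hκ : 0 ≤ κ) (hη : 0 < η) :
    ∃ V' : ℝ → ℝ, ∀ t ≥ 0,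
      HasDerivAt (fun s => adaptiveEnergy P Λ γ κ η (e s) (eL s) (W s)) (V' t) t ∧
        V' t ≤ -(e t ⬝ᵥ R *ᵥ e t) := by
  refine ⟨_, fun t ht => ⟨h.hasDerivAt_adaptiveEnergy
    (isHermitian_iff_isSymm.1 hP.isHermitian) hΛ hLyap hγ hη.ne' ht, ?_⟩⟩
  have hfilter : 0 ≤ κ / η * (eL t ⬝ᵥ R *ᵥ eL t) :=
    mul_nonneg (div_nonneg hκ hη.le) (dotProduct_mulVec_self_nonneg hR _)
  have hgap : 0 ≤ 2 * κ * ((e t - eL t) ⬝ᵥ P *ᵥ (e t - eL t)) :=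
    mul_nonneg (by positivity) (dotProduct_mulVec_self_nonneg hP _)
  linarith

lemma antitoneOn_adaptiveEnergy (h : IsFilteredAdaptiveLoop A P B Λ γ κ η σ e eL W)
    (hP : P.PosSemidef) (hΛ : Λ.IsSymm) (hR : R.PosSemidef) (hLyap : Aᵀ * P + P * A + R = 0)
    (hγ : γ ≠ 0) (hκ : 0 ≤ κ) (hη : 0 < η) :
    AntitoneOn (fun t => adaptiveEnergy P Λ γ κ η (e t) (eL t) (W t)) (Ici 0) := by
  obtain ⟨V', hV⟩ := h.exists_hasDerivAt_adaptiveEnergy_le hP hΛ hR hLyap hγ hκ hη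
  exact antitoneOn_Ici_of_hasDerivAt_nonpos (fun t ht => (hV t ht).1) fun t ht =>
    (hV t ht).2.trans (neg_nonpos.2 (dotProduct_mulVec_self_nonneg hR _))

lemma isBigO_error_deriv (h : IsFilteredAdaptiveLoop A P B Λ γ κ η σ e eL W)
    (hP : P.PosDef) (hΛ : Λ.PosSemidef) (hR : R.PosSemidef) (hLyap : Aᵀ * P + P * A + R = 0)
    (hγ : 0 < γ) (hκ : 0 ≤ κ) (hη : 0 < η) (hσ : σ =O[𝓟 (Ici 0)] (1 : ℝ → ℝ)) :
    (fun t => A *ᵥ e t - (B * Λ * (W t)ᵀ) *ᵥ σ t - κ • (e t - eL t))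
      =O[𝓟 (Ici 0)] (1 : ℝ → ℝ) := by
  have hanti := h.antitoneOn_adaptiveEnergy hP.posSemidef
    (isHermitian_iff_isSymm.1 hΛ.isHermitian) hR hLyap hγ.ne' hκ hη
  have hC : ∀ t ∈ Ici (0 : ℝ), adaptiveEnergy P Λ γ κ η (e t) (eL t) (W t) ≤
      adaptiveEnergy P Λ γ κ η (e 0) (eL 0) (W 0) := fun t ht => hanti self_mem_Ici ht ht
  have he : e =O[𝓟 (Ici 0)] (1 : ℝ → ℝ) := isBigO_one_of_adaptiveEnergy_le_error hP hΛ hγ.le hκ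
    hη.le hC
  have heL : (fun t => κ • eL t) =O[𝓟 (Ici 0)] (1 : ℝ → ℝ) :=
    isBigO_one_of_adaptiveEnergy_le_filter hP hΛ hγ.le hκ hη hC
  have hW (i : k) : (fun t => Λ *ᵥ W t i) =O[𝓟 (Ici 0)] (1 : ℝ → ℝ) :=
    isBigO_one_of_adaptiveEnergy_le_weight hP.posSemidef hΛ hγ hκ hη.le hC i
  have hσW (i : k) : (fun t => σ t i • (Λ *ᵥ W t i)) =O[𝓟 (Ici 0)] (1 : ℝ → ℝ) :=
    ((isBigO_pi.1 hσ i).smul (hW i)).congr_right fun _ => by simp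
  simp only [mul_transpose_mulVec_eq_sum, smul_sub]
  exact (((isBigO_mulVec A e _).trans he).sub
    ((isBigO_mulVec B _ _).trans (.fun_sum fun i _ => hσW i))).sub
    ((he.const_smul_left κ).sub heL)

lemma tendsto_error (h : IsFilteredAdaptiveLoop A P B Λ γ κ η σ e eL W)
    (hP : P.PosDef) (hΛ : Λ.PosSemidef) (hR : R.PosDef) (hLyap : Aᵀ * P + P * A + R = 0)
    (hγ : 0 < γ) (hκ : 0 ≤ κ) (hη : 0 < η) (hσ : σ =O[𝓟 (Ici 0)] (1 : ℝ → ℝ)) :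
    Tendsto e atTop (𝓝 0) := by
  obtain ⟨V', hV⟩ := h.exists_hasDerivAt_adaptiveEnergy_le hP.posSemidef
    (isHermitian_iff_isSymm.1 hΛ.isHermitian) hR.posSemidef hLyap hγ.ne' hκ hη
  obtain ⟨c, hc, hcR⟩ := exists_mul_norm_sq_le_quadForm hR
  have huc : UniformContinuousOn e (Ici 0) :=
    uniformContinuousOn_of_hasDerivAt_isBigO_one (convex_Ici 0) h.hasDerivAt_error
      (h.isBigO_error_deriv hP hΛ hR.posSemidef hLyap hγ hκ hη hσ)
  refine tendsto_zero_of_deriv_le_neg_mul_norm_pow hc huc (fun t ht => (hV t ht).1)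
    (fun t ht => (hV t ht).2.trans (neg_le_neg (hcR (e t)))) ⟨0, ?_⟩
  rintro _ ⟨t, -, rfl⟩
  exact adaptiveEnergy_nonneg hP.posSemidef hΛ hγ.le hκ hη.le _ _ _

lemma tendsto_filter (h : IsFilteredAdaptiveLoop A P B Λ γ κ η σ e eL W)
    (hP : P.PosDef) (hR : R.PosDef) (hLyap : Aᵀ * P + P * A + R = 0) (hη : 0 ≤ η)
    (he : Tendsto e atTop (𝓝 0)) : Tendsto eL atTop (𝓝 0) := by
  classical
  have hdamped : (A - η • 1)ᵀ * P + P * (A - η • 1) + (R + (2 * η) • P) = 0 := by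
    simp only [transpose_sub, transpose_smul, transpose_one, sub_mul, mul_sub,
      smul_mul_assoc, mul_smul_comm, one_mul, mul_one, two_mul, add_smul]
    rw [← hLyap]
    abel
  refine tendsto_zero_of_lyapunov_of_input_tendsto_zero hP
    (hR.add_posSemidef (hP.posSemidef.smul (by positivity))) hdamped
    (u := fun t => η • e t) ?_ (by simpa using he.const_smul η)
  filter_upwards [eventually_ge_atTop 0] with t ht
  refine (h.hasDerivAt_filter t ht).congr_deriv ?_
  rw [sub_mulVec, smul_mulVec, one_mulVec, smul_sub]
  abel

end IsFilteredAdaptiveLoop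

end AdaptiveLoop

theorem statement7_general {n k m : Type*} [Fintype n] [Fintype k] [Fintype m]
    {A P R : Matrix n n ℝ} {B : Matrix n m ℝ} {Λ : Matrix m m ℝ} {γ κ η : ℝ}
    {σ : ℝ → k → ℝ} {e eL xt : ℝ → n → ℝ} {W : ℝ → Matrix k m ℝ}
    (hloop : IsFilteredAdaptiveLoop A P B Λ γ κ η σ e eL W)
    (hxt : ∀ t ≥ 0, HasDerivAt xt (A *ᵥ xt t + κ • (e t - eL t)) t)
    (hP : P.PosDef) (hΛ : Λ.PosSemidef) (hR : R.PosDef) (hLyap : Aᵀ * P + P * A + R = 0)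
    (hγ : 0 < γ) (hκ : 0 ≤ κ) (hη : 0 < η) (hσ : ∃ C, ∀ t ≥ 0, ‖σ t‖ ≤ C) :
    Tendsto e atTop (𝓝 0) ∧ Tendsto eL atTop (𝓝 0) ∧ Tendsto xt atTop (𝓝 0) ∧
      Tendsto (fun t => e t + xt t) atTop (𝓝 0) := by
  have hσ : σ =O[𝓟 (Ici 0)] (1 : ℝ → ℝ) := isBigO_principal.2 (by simpa using hσ)
  have he := hloop.tendsto_error hP hΛ hR hLyap hγ hκ hη hσ
  have heL := hloop.tendsto_filter hP hR hLyap hη.le he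
  have hxt : Tendsto xt atTop (𝓝 0) := tendsto_zero_of_lyapunov_of_input_tendsto_zero hP hR hLyap
    ((eventually_ge_atTop 0).mono hxt) (by simpa using (he.sub heL).const_smul κ)
  exact ⟨he, heL, hxt, by simpa using he.add hxt⟩

lemma norm_le_norm2 {n : ℕ} (v : Fin n → ℝ) : ‖v‖ ≤ norm2 v :=
  Real.le_sqrt_of_sq_le (by simpa [dotProduct, sq] using norm_sq_le_dotProduct_self v)

theorem statement7
    {n N m : ℕ} (hn : 0 < n) (hN : 0 < N) (hm : 0 < m)
    (Ar : Matrix (Fin n) (Fin n) ℝ) (B : Matrix (Fin n) (Fin m) ℝ)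
    (Lam Lhalf : Matrix (Fin m) (Fin m) ℝ) (R P : Matrix (Fin n) (Fin n) ℝ)
    (hAr : Hurwitz Ar)
    (hLam : Lam.PosDef) (hLamDiag : Lam.IsDiag)
    (hLhalfDiag : Lhalf.IsDiag) (hLhalfSq : Lhalf * Lhalf = Lam)
    (hR : R.PosDef) (hP : P.PosDef)
    (hLyap : Arᵀ * P + P * Ar + R = 0)
    (γ κ η ξ : ℝ) (hγ : 0 < γ) (hκ : 0 < κ) (hη : 0 < η) (hξ0 : 0 < ξ) (hξ1 : ξ < 1)
    (σx : ℝ → Fin N → ℝ)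
    (e eL xt : ℝ → Fin n → ℝ) (Wt : ℝ → Matrix (Fin N) (Fin m) ℝ)
    (heL0 : eL 0 = 0) (hxt0 : xt 0 = 0)
    (he : ∀ t ≥ (0:ℝ), HasDerivAt e
          (Ar *ᵥ e t - (B * Lam * (Wt t)ᵀ) *ᵥ σx t - κ • (e t - eL t)) t)
    (hW : ∀ t ≥ (0:ℝ), ∀ i j, HasDerivAt (fun s => Wt s i j)
          (γ * (σx t i * ((e t) ᵥ* (P * B)) j)) t)
    (heL : ∀ t ≥ (0:ℝ), HasDerivAt eL (Ar *ᵥ eL t + η • (e t - eL t)) t)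
    (hxt : ∀ t ≥ (0:ℝ), HasDerivAt xt (Ar *ᵥ xt t + κ • (e t - eL t)) t)
    (hσ : ∃ C : ℝ, ∀ t ≥ (0:ℝ), norm2 (σx t) ≤ C)
    : Tendsto e atTop (nhds 0) ∧ Tendsto eL atTop (nhds 0) ∧ Tendsto xt atTop (nhds 0)
      ∧ Tendsto (fun t => e t + xt t) atTop (nhds 0) := by
  obtain ⟨C, hC⟩ := hσ
  exact statement7_general ⟨he, hW, heL⟩ hxt hP hLam.posSemidef hR hLyap hγ hκ.le hη
    ⟨C, fun t ht => (norm_le_norm2 (σx t)).trans (hC t ht)⟩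
end
end

section
/- (Asymptotic expansions in the proof of Theorem 6.1) There exist constants C > 0 and κ₀ > 0 such that for every κ ≥ κ₀ and every t ≥ 0, ‖e_{L,κ}(t)‖₂ ≤ C/κ and ‖e_κ(t) − e^{−κt} e₀‖₂ ≤ C/κ; that is, e(t, κ) = e^{−κt} e₀ + O(κ^{−1}) and e_L(t, κ) = O(κ^{−1}) uniformly in t ≥ 0 for sufficiently large κ. -/
open Matrix Filter

noncomputable section

/-!
Subtracting the two equations, the high-frequency error `e_H = e - e_L` obeys
`e_H' = -(κ + η) e_H + (A e_H - f)`, whose damping beats `A` once `κ + η > ‖A‖`; hence `e_H` is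
bounded uniformly in `κ`. The combination `w = e_L + (η / (κ + η)) e_H` eliminates the unbounded
coefficient: `w' = A w - (η / (κ + η)) f`, a stable system with input and initial value `O(1 / κ)`,
so `e_L` is `O(1 / κ)`. Finally `d = e_H - e^{-κt} e₀` starts at `0` and obeys
`d' = -κ d + O(1)`, so it is `O(1 / κ)` as well.

Stability of a Hurwitz matrix `A` is obtained without decay estimates for `e^{tA}`: by
Cayley-Hamilton `∏ (A - μᵢ) = 0`, and peeling off one factor at a time bounds `N y` for
`N = ∏_{i ≤ k} (A - μᵢ)`, from the full product `N = 0` down to the empty product `N = 1`.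
-/

open Set Polynomial WithLp
open scoped NNReal

section DampedSystems

variable {E : Type*} [NormedAddCommGroup E]

lemma norm_le_max_of_damped [NormedSpace ℝ E] {a c H : ℝ} (hac : a < c) {y h : ℝ → E}
    (hy : IsIntegralCurveOn y (fun t x => -c • x + h t) (Ici 0))
    (hh : ∀ t ≥ 0, ‖h t‖ ≤ a * ‖y t‖ + H) {t : ℝ} (ht : 0 ≤ t) :
    ‖y t‖ ≤ max ‖y 0‖ (H / (c - a)) := by
  -- Every ball of radius `β` above the bound is trapping: compare `‖e^{ct} y‖` with `β e^{ct}`,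
  -- which grows strictly faster wherever the two touch.
  refine le_of_forall_gt_imp_ge_of_dense fun β hβ => ?_
  obtain ⟨hyβ, hHβ⟩ := max_lt_iff.1 hβ
  rw [div_lt_iff₀ (sub_pos.2 hac)] at hHβ
  have hexp (s : ℝ) : HasDerivAt (fun s => Real.exp (c * s)) (Real.exp (c * s) * c) s := by
    simpa using ((hasDerivAt_id s).const_mul c).exp
  have hnorm (s : ℝ) (x : E) : ‖Real.exp (c * s) • x‖ = Real.exp (c * s) * ‖x‖ := by
    rw [norm_smul, Real.norm_of_nonneg (Real.exp_pos _).le]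
  have hz : ∀ s ≥ 0, HasDerivWithinAt (fun s => Real.exp (c * s) • y s)
      (Real.exp (c * s) • h s) (Ici 0) s := fun s hs =>
    ((hexp s).hasDerivWithinAt.smul (hy s hs)).congr_deriv (by module)
  have hbarrier : ∀ s ∈ Ico 0 t, ‖Real.exp (c * s) • y s‖ = Real.exp (c * s) * β →
      ‖Real.exp (c * s) • h s‖ < Real.exp (c * s) * c * β := fun s hs htouch => by
    rw [hnorm] at htouch ⊢
    have hys : ‖y s‖ = β := mul_left_cancel₀ (Real.exp_pos _).ne' htouch
    rw [mul_assoc]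
    gcongr
    linarith [hys ▸ hh s hs.1]
  have hfence := image_norm_le_of_norm_deriv_right_lt_deriv_boundary
    (fun s hs => (hz s hs.1).continuousWithinAt.mono Icc_subset_Ici_self)
    (fun s hs => (hz s hs.1).mono (Ici_subset_Ici.2 hs.1))
    (by simpa using hyβ.le) (fun s => (hexp s).mul_const β) hbarrier ⟨ht, le_rfl⟩
  rw [hnorm] at hfence
  exact le_of_mul_le_mul_left hfence (Real.exp_pos _)

lemma norm_le_max_of_re_neg [NormedSpace ℂ E] {μ : ℂ} (hμ : μ.re < 0) {H : ℝ} {y h : ℝ → E}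
    (hy : IsIntegralCurveOn y (fun t x => μ • x + h t) (Ici 0))
    (hh : ∀ t ≥ 0, ‖h t‖ ≤ H) {t : ℝ} (ht : 0 ≤ t) :
    ‖y t‖ ≤ max ‖y 0‖ (H / -μ.re) := by
  -- Rotating by `e^{-i t Im μ}` preserves norms and turns the coefficient `μ` into `Re μ`.
  set rot : ℝ → ℂ := fun s => Complex.exp (-(μ.im * Complex.I) * s) with hrot
  have hnorm (s : ℝ) (x : E) : ‖rot s • x‖ = ‖x‖ := by
    simp [hrot, norm_smul, Complex.norm_exp]
  have hrot_deriv (s : ℝ) : HasDerivAt rot (rot s * -(μ.im * Complex.I)) s := by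
    simpa [hrot] using
      ((Complex.ofRealCLM.hasDerivAt (x := s)).const_mul (-(μ.im * Complex.I))).cexp
  have hz : IsIntegralCurveOn (fun s => rot s • y s)
      (fun s x => -(-μ.re) • x + rot s • h s) (Ici 0) := fun s hs => by
    refine ((hrot_deriv s).hasDerivWithinAt.smul (hy s hs)).congr_deriv ?_
    have hμy : μ • y s = (μ.re : ℂ) • y s + (μ.im * Complex.I) • y s := by
      rw [← add_smul, Complex.re_add_im]
    simp only [neg_neg, hμy, ← Complex.coe_smul]
    module
  simpa [hnorm] using norm_le_max_of_damped (a := 0) (H := H) (neg_pos.2 hμ) hz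
    (fun s hs => by simpa [hnorm] using hh s hs) ht

end DampedSystems

section OutputGain

/-- The output `N y` of the forced system `y' = A y + h` on `[0, ∞)` is bounded by `K * H` whenever
the initial state and the input `h` are bounded by `H` (bounded-input bounded-output stability with
gain `K`). For `N = id` this is bounded-input bounded-state stability. The maps `A` and `N` are
plain functions so that real and complex linear operators are treated alike. -/
def HasOutputGain {E F : Type*} [NormedAddCommGroup E] [NormedSpace ℝ E] [NormedAddCommGroup F]
    (A : E → E) (N : E → F) (K : ℝ≥0) : Prop :=
  ∀ ⦃y h : ℝ → E⦄ ⦃H : ℝ⦄, IsIntegralCurveOn y (fun t x => A x + h t) (Ici 0) →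
    ‖y 0‖ ≤ H → (∀ t ≥ 0, ‖h t‖ ≤ H) → ∀ t ≥ 0, ‖N (y t)‖ ≤ K * H

lemma HasOutputGain.of_semiconj {E F : Type*} [NormedAddCommGroup E] [NormedSpace ℝ E]
    [NormedAddCommGroup F] [NormedSpace ℝ F] {A : E → E} {B : F → F} {K : ℝ≥0}
    (hB : HasOutputGain B id K) (ι : E →ₗᵢ[ℝ] F) (hι : Function.Semiconj ι A B) :
    HasOutputGain A id K := fun y h H hy hy₀ hh t ht => by
  have hιy : IsIntegralCurveOn (ι ∘ y) (fun s x => B x + (ι ∘ h) s) (Ici 0) := fun s hs =>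
    (ι.toContinuousLinearMap.hasFDerivAt.comp_hasDerivWithinAt s (hy s hs)).congr_deriv
      (by simp [← hι.eq])
  simpa using hB hιy (by simpa using hy₀) (by simpa using hh) t ht

variable {E F : Type*} [NormedAddCommGroup E] [NormedSpace ℂ E] [NormedAddCommGroup F]
  [NormedSpace ℂ F] {A : E →L[ℂ] E}

lemma HasOutputGain.of_comp_sub_smul {μ : ℂ} (hμ : μ.re < 0) {N : E →L[ℂ] F} {K : ℝ≥0}
    (hK : HasOutputGain A (N ∘L (A - μ • 1)) K) :
    HasOutputGain A N (‖N‖₊ + (K + ‖N‖₊) / (-μ.re).toNNReal) := fun y h H hy hy₀ hh t ht => by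
  have hNy : IsIntegralCurveOn (N ∘ y)
      (fun s z => μ • z + ((N ∘L (A - μ • 1)) (y s) + N (h s))) (Ici 0) := fun s hs =>
    ((N.restrictScalars ℝ).hasFDerivAt.comp_hasDerivWithinAt s (hy s hs)).congr_deriv (by
      simp [← add_assoc])
  have hforcing : ∀ s ≥ 0, ‖(N ∘L (A - μ • 1)) (y s) + N (h s)‖ ≤ K * H + ‖N‖ * H := fun s hs =>
    norm_add_le_of_le (hK hy hy₀ hh s hs) (N.le_opNorm_of_le (hh s hs))
  have hc : 0 < -μ.re := neg_pos.2 hμ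
  have hH : 0 ≤ H := (norm_nonneg _).trans hy₀
  calc ‖N (y t)‖ ≤ max ‖N (y 0)‖ ((K * H + ‖N‖ * H) / -μ.re) :=
        norm_le_max_of_re_neg hμ hNy hforcing ht
    _ ≤ ‖N (y 0)‖ + (K * H + ‖N‖ * H) / -μ.re :=
        max_le_add_of_nonneg (norm_nonneg _) (by positivity)
    _ ≤ ‖N‖ * H + (K * H + ‖N‖ * H) / -μ.re := by gcongr; exact N.le_opNorm_of_le hy₀
    _ = _ := by
        push_cast [Real.coe_toNNReal _ hc.le]
        ring

lemma exists_hasOutputGain_of_comp_prod_eq_zero {s : Multiset ℂ} (hs : ∀ μ ∈ s, μ.re < 0)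
    {N : E →L[ℂ] F} (hN : N ∘L aeval A (s.map fun μ => X - C μ).prod = 0) :
    ∃ K, HasOutputGain A N K := by
  induction s using Multiset.induction generalizing N with
  | empty =>
    obtain rfl : N = 0 := by simpa [ContinuousLinearMap.one_def] using hN
    exact ⟨0, by simp [HasOutputGain]⟩
  | cons μ s ih =>
    obtain ⟨K, hK⟩ := ih (fun ν hν => hs ν (Multiset.mem_cons_of_mem hν))
      (N := N ∘L (A - μ • 1)) (by
        rw [← hN, Multiset.map_cons, Multiset.prod_cons, map_mul, ContinuousLinearMap.comp_assoc]
        simp [Algebra.algebraMap_eq_smul_one, ContinuousLinearMap.mul_def])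
    exact ⟨_, hK.of_comp_sub_smul (hs μ (Multiset.mem_cons_self μ s))⟩

lemma exists_hasOutputGain_id_of_aeval_eq_zero {p : ℂ[X]} (hp : p ≠ 0) (hpA : aeval A p = 0)
    (hroots : ∀ μ, p.IsRoot μ → μ.re < 0) : ∃ K, HasOutputGain A id K := by
  have hprod : aeval A (p.roots.map fun μ => X - C μ).prod = 0 := by
    rw [(IsAlgClosed.splits p).eq_prod_roots, map_mul, aeval_C,
      Algebra.algebraMap_eq_smul_one, smul_one_mul] at hpA
    exact (smul_eq_zero.1 hpA).resolve_left (leadingCoeff_ne_zero.2 hp)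
  exact exists_hasOutputGain_of_comp_prod_eq_zero (N := ContinuousLinearMap.id ℂ E)
    (fun μ hμ => hroots μ (isRoot_of_mem_roots hμ)) (by rw [hprod]; simp)

end OutputGain

section Hurwitz

/-- The inclusion of the real Euclidean space indexed by `ι` into the complex one, as a real-linear
isometry; it carries stability over `ℂ`, where the characteristic polynomial splits, back to `ℝ`. -/
def euclideanOfReal (ι : Type*) [Fintype ι] : EuclideanSpace ℝ ι →ₗᵢ[ℝ] EuclideanSpace ℂ ι where
  toFun v := toLp 2 fun i => (v i : ℂ)
  map_add' v w := by ext; simp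
  map_smul' a v := by ext; simp
  norm_map' v := by simp [EuclideanSpace.norm_eq]

lemma semiconj_euclideanOfReal {ι : Type*} [Fintype ι] [DecidableEq ι] (A : Matrix ι ι ℝ) :
    Function.Semiconj (euclideanOfReal ι) (toEuclideanCLM (𝕜 := ℝ) A)
      (toEuclideanCLM (𝕜 := ℂ) (A.map Complex.ofReal)) := fun v => by
  ext i
  simp [euclideanOfReal, Matrix.mulVec, dotProduct]

lemma Hurwitz.exists_hasOutputGain_id {n : ℕ} {A : Matrix (Fin n) (Fin n) ℝ} (hA : Hurwitz A) :
    ∃ K, HasOutputGain (toEuclideanCLM (𝕜 := ℝ) A) id K := by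
  set B := A.map Complex.ofReal
  have hcayley : aeval (toEuclideanCLM (𝕜 := ℂ) B) B.charpoly = 0 := by
    rw [aeval_algHom_apply, aeval_self_charpoly, map_zero]
  obtain ⟨K, hK⟩ := exists_hasOutputGain_id_of_aeval_eq_zero B.charpoly_monic.ne_zero hcayley hA
  exact ⟨K, hK.of_semiconj (euclideanOfReal (Fin n)) (semiconj_euclideanOfReal A)⟩

end Hurwitz

section ErrorSystem

variable {E : Type*} [NormedAddCommGroup E] [NormedSpace ℝ E]

/-- A trajectory of the modified system error `e` together with the output `eL` of the low-pass
filter, for system operator `A`, modification gain `κ`, filter gain `η` and uncertainty mismatch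
`f`, the filter starting at rest. -/
structure IsErrorTrajectory (A : E →L[ℝ] E) (κ η : ℝ) (f e eL : ℝ → E) : Prop where
  error : IsIntegralCurveOn e (fun t x => A x - f t - κ • (x - eL t)) (Ici 0)
  filter : IsIntegralCurveOn eL (fun t x => A x + η • (e t - x)) (Ici 0)
  filter_zero : eL 0 = 0

variable {A : E →L[ℝ] E} {κ η R : ℝ} {f e eL : ℝ → E}

namespace IsErrorTrajectory

lemma isIntegralCurveOn_sub (h : IsErrorTrajectory A κ η f e eL) :
    IsIntegralCurveOn (e - eL)
      (fun t x => -(κ + η) • x + (A ((e - eL) t) - f t)) (Ici 0) := fun t ht =>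
  ((h.error t ht).sub (h.filter t ht)).congr_deriv (by simp only [Pi.sub_apply, map_sub]; module)

lemma sub_apply_zero (h : IsErrorTrajectory A κ η f e eL) : (e - eL) 0 = e 0 := by
  simp [h.filter_zero]

lemma norm_sub_le (h : IsErrorTrajectory A κ η f e eL) (hκ : ‖A‖ + 1 ≤ κ + η)
    (he : ‖e 0‖ ≤ R) (hf : ∀ t ≥ 0, ‖f t‖ ≤ R) {t : ℝ} (ht : 0 ≤ t) : ‖(e - eL) t‖ ≤ R := by
  have hforcing : ∀ s ≥ 0, ‖A ((e - eL) s) - f s‖ ≤ ‖A‖ * ‖(e - eL) s‖ + R := fun s hs =>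
    norm_sub_le_of_le (A.le_opNorm _) (hf s hs)
  refine (norm_le_max_of_damped (by linarith) h.isIntegralCurveOn_sub hforcing ht).trans
    (max_le (h.sub_apply_zero ▸ he) ?_)
  exact div_le_self ((norm_nonneg _).trans he) (by linarith)

lemma isIntegralCurveOn_add_smul (h : IsErrorTrajectory A κ η f e eL) (hκ : κ + η ≠ 0) :
    IsIntegralCurveOn (eL + (η / (κ + η)) • (e - eL))
      (fun t x => A x + -(η / (κ + η)) • f t) (Ici 0) := fun t ht => by
  refine ((h.filter t ht).add
    ((h.isIntegralCurveOn_sub t ht).const_smul (η / (κ + η)))).congr_deriv ?_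
  have hcancel : (η / (κ + η)) • -(κ + η) • (e - eL) t = -η • (e - eL) t := by
    rw [smul_smul]
    congr 1
    field_simp
  simp only [smul_add, hcancel]
  simp only [Pi.add_apply, Pi.smul_apply, Pi.sub_apply, map_add, map_sub, map_smul]
  module

lemma norm_filter_le {K : ℝ≥0} (hA : HasOutputGain A id K) (h : IsErrorTrajectory A κ η f e eL)
    (hκ : ‖A‖ + 1 ≤ κ + η) (he : ‖e 0‖ ≤ R) (hf : ∀ t ≥ 0, ‖f t‖ ≤ R) {t : ℝ} (ht : 0 ≤ t) :
    ‖eL t‖ ≤ (K + 1) * (|η / (κ + η)| * R) := by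
  set ε := η / (κ + η)
  have hε_smul {x : E} (hx : ‖x‖ ≤ R) : ‖ε • x‖ ≤ |ε| * R := by
    rw [norm_smul, Real.norm_eq_abs]
    gcongr
  have hw : ‖eL t + ε • (e - eL) t‖ ≤ K * (|ε| * R) :=
    hA (h.isIntegralCurveOn_add_smul (by linarith [norm_nonneg A]))
      (by simpa [h.filter_zero] using hε_smul he)
      (fun s hs => by simpa using hε_smul (hf s hs)) t ht
  calc ‖eL t‖ = ‖(eL t + ε • (e - eL) t) - ε • (e - eL) t‖ := by rw [add_sub_cancel_right]
    _ ≤ K * (|ε| * R) + |ε| * R := norm_sub_le_of_le hw (hε_smul (h.norm_sub_le hκ he hf ht))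
    _ = (K + 1) * (|ε| * R) := by ring

lemma norm_sub_sub_exp_smul_le (h : IsErrorTrajectory A κ η f e eL) (hκ₀ : 0 < κ)
    (hκ : ‖A‖ + 1 ≤ κ + η) (he : ‖e 0‖ ≤ R) (hf : ∀ t ≥ 0, ‖f t‖ ≤ R) {t : ℝ} (ht : 0 ≤ t) :
    ‖(e - eL) t - Real.exp (-κ * t) • e 0‖ ≤ (‖A‖ + 1 + |η|) * R / κ := by
  have hexp (s : ℝ) : HasDerivAt (fun s => Real.exp (-κ * s)) (Real.exp (-κ * s) * -κ) s := by
    simpa using ((hasDerivAt_id s).const_mul (-κ)).exp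
  have hd : IsIntegralCurveOn (fun s => (e - eL) s - Real.exp (-κ * s) • e 0)
      (fun s x => -κ • x + (A ((e - eL) s) - f s - η • (e - eL) s)) (Ici 0) := fun s hs =>
    ((h.isIntegralCurveOn_sub s hs).sub
      ((hexp s).hasDerivWithinAt.smul_const (e 0))).congr_deriv (by module)
  have hforcing : ∀ s ≥ 0, ‖A ((e - eL) s) - f s - η • (e - eL) s‖ ≤ (‖A‖ + 1 + |η|) * R :=
    fun s hs => by
      have hs' := h.norm_sub_le hκ he hf hs
      calc _ ≤ ‖A‖ * R + R + |η| * R := by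
            refine norm_sub_le_of_le (norm_sub_le_of_le (A.le_opNorm_of_le hs') (hf s hs)) ?_
            rw [norm_smul, Real.norm_eq_abs]
            gcongr
        _ = _ := by ring
  have hR : 0 ≤ R := (norm_nonneg _).trans he
  refine (norm_le_max_of_damped (a := 0) hκ₀ hd (by simpa using hforcing) ht).trans
    (max_le ?_ (by rw [sub_zero]))
  simp only [h.sub_apply_zero, mul_zero, Real.exp_zero, one_smul, sub_self, norm_zero]
  positivity

end IsErrorTrajectory

lemma abs_div_add_le_two_mul_div (hκ₀ : 0 < κ) (hκ : 2 * |η| ≤ κ) :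
    |η / (κ + η)| ≤ 2 * |η| / κ := by
  have hsum : κ / 2 ≤ κ + η := by linarith [neg_abs_le η]
  rw [abs_div, abs_of_pos (by linarith : 0 < κ + η)]
  calc |η| / (κ + η) ≤ |η| / (κ / 2) := by gcongr
    _ = 2 * |η| / κ := by field_simp

end ErrorSystem

section Coordinates

lemma norm2_eq_norm_toLp {n : ℕ} (v : Fin n → ℝ) : norm2 v = ‖toLp 2 v‖ := by
  simp [norm2, EuclideanSpace.norm_eq]

variable {ι : Type*} [Fintype ι]

lemma hasDerivWithinAt_toLp (p : ENNReal) [Fact (1 ≤ p)] {y : ℝ → ι → ℝ} {y' : ι → ℝ} {s : Set ℝ}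
    {t : ℝ} (hy : HasDerivWithinAt y y' s t) :
    HasDerivWithinAt (fun t => toLp p (y t)) (toLp p y') s t :=
  (PiLp.hasFDerivAt_toLp p (y t)).comp_hasDerivWithinAt t hy

lemma isErrorTrajectory_toLp [DecidableEq ι] {A : Matrix ι ι ℝ} {κ η : ℝ} {f e eL : ℝ → ι → ℝ}
    (he : IsIntegralCurveOn e (fun t x => A *ᵥ x - f t - κ • (x - eL t)) (Ici 0))
    (heL : IsIntegralCurveOn eL (fun t x => A *ᵥ x + η • (e t - x)) (Ici 0)) (heL₀ : eL 0 = 0) :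
    IsErrorTrajectory (toEuclideanCLM (𝕜 := ℝ) A) κ η
      (fun t => toLp 2 (f t)) (fun t => toLp 2 (e t)) (fun t => toLp 2 (eL t)) where
  error t ht := hasDerivWithinAt_toLp 2 (he t ht)
  filter t ht := hasDerivWithinAt_toLp 2 (heL t ht)
  filter_zero := congrArg (toLp 2) heL₀

end Coordinates

theorem statement12_general {E : Type*} [NormedAddCommGroup E] [NormedSpace ℝ E]
    {A : E →L[ℝ] E} {K : ℝ≥0} (hA : HasOutputGain A id K) {η : ℝ} {e₀ : E} {M : ℝ}
    {f e eL : ℝ → ℝ → E} (hsys : ∀ κ > 0, IsErrorTrajectory A κ η (f κ) (e κ) (eL κ))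
    (he₀ : ∀ κ > 0, e κ 0 = e₀) (hf : ∀ κ > 0, ∀ t ≥ 0, ‖f κ t‖ ≤ M) :
    ∃ C > 0, ∃ κ₀ > 0, ∀ κ ≥ κ₀, ∀ t ≥ 0,
      ‖eL κ t‖ ≤ C / κ ∧ ‖e κ t - Real.exp (-κ * t) • e₀‖ ≤ C / κ := by
  set R := max ‖e₀‖ M + 1
  set Cfilter := (K + 1) * (2 * |η|) * R
  set Chigh := (‖A‖ + 1 + |η|) * R
  have hCfilter : 0 ≤ Cfilter := by positivity
  have hChigh : 0 < Chigh := by positivity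
  refine ⟨Cfilter + Chigh, by positivity, ‖A‖ + 1 + 2 * |η|, by positivity,
    fun κ hκ t ht => ?_⟩
  have hκ₀ : 0 < κ := lt_of_lt_of_le (by positivity) hκ
  have hdamp : ‖A‖ + 1 ≤ κ + η := by linarith [neg_abs_le η, abs_nonneg η]
  have he : ‖e κ 0‖ ≤ R := by
    rw [he₀ κ hκ₀]
    linarith [le_max_left ‖e₀‖ M]
  have hfR : ∀ s ≥ 0, ‖f κ s‖ ≤ R := fun s hs => by linarith [hf κ hκ₀ s hs, le_max_right ‖e₀‖ M]
  have hfilter : ‖eL κ t‖ ≤ Cfilter / κ :=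
    calc ‖eL κ t‖ ≤ (K + 1) * (|η / (κ + η)| * R) := (hsys κ hκ₀).norm_filter_le hA hdamp he hfR ht
      _ ≤ (K + 1) * (2 * |η| / κ * R) := by
          gcongr
          exact abs_div_add_le_two_mul_div hκ₀ (by linarith [norm_nonneg A])
      _ = Cfilter / κ := by ring
  have hhigh : ‖(e κ - eL κ) t - Real.exp (-κ * t) • e₀‖ ≤ Chigh / κ :=
    he₀ κ hκ₀ ▸ (hsys κ hκ₀).norm_sub_sub_exp_smul_le hκ₀ hdamp he hfR ht
  rw [add_div]
  refine ⟨hfilter.trans (le_add_of_nonneg_right (by positivity)), ?_⟩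
  calc ‖e κ t - Real.exp (-κ * t) • e₀‖
      = ‖eL κ t + ((e κ - eL κ) t - Real.exp (-κ * t) • e₀)‖ := by
        congr 1
        simp only [Pi.sub_apply]
        abel
    _ ≤ Cfilter / κ + Chigh / κ := norm_add_le_of_le hfilter hhigh

theorem statement12
    {n : ℕ} (hn : 0 < n)
    (Ar : Matrix (Fin n) (Fin n) ℝ) (hAr : Hurwitz Ar)
    (η : ℝ) (hη : 0 ≤ η) (e0 : Fin n → ℝ) (M : ℝ) (hM : 0 < M)
    (f e eL : ℝ → ℝ → Fin n → ℝ)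
    (hfc : ∀ κ > (0:ℝ), ContinuousOn (f κ) (Set.Ici 0))
    (hfb : ∀ κ > (0:ℝ), ∀ t ≥ (0:ℝ), norm2 (f κ t) ≤ M)
    (hei : ∀ κ > (0:ℝ), e κ 0 = e0) (heLi : ∀ κ > (0:ℝ), eL κ 0 = 0)
    (he : ∀ κ > (0:ℝ), ∀ t ≥ (0:ℝ), HasDerivAt (e κ)
          (Ar *ᵥ e κ t - f κ t - κ • (e κ t - eL κ t)) t)
    (heL : ∀ κ > (0:ℝ), ∀ t ≥ (0:ℝ), HasDerivAt (eL κ)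
          (Ar *ᵥ eL κ t + η • (e κ t - eL κ t)) t)
    : ∃ C > (0:ℝ), ∃ κ₀ > (0:ℝ), ∀ κ ≥ κ₀, ∀ t ≥ (0:ℝ),
      norm2 (eL κ t) ≤ C / κ
      ∧ norm2 (e κ t - Real.exp (-κ * t) • e0) ≤ C / κ := by
  obtain ⟨_, hK⟩ := hAr.exists_hasOutputGain_id
  simp only [norm2_eq_norm_toLp] at hfb ⊢
  exact statement12_general hK
    (fun κ hκ => isErrorTrajectory_toLp (fun t ht => (he κ hκ t ht).hasDerivWithinAt)
      (fun t ht => (heL κ hκ t ht).hasDerivWithinAt) (heLi κ hκ))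
    (fun κ hκ => congrArg (toLp 2) (hei κ hκ)) hfb
end
end
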